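/- Let μ > 0 and let γ₁ be a closed regular curve in S² with geodesic curvature satisfying min κ₁ > μ, whose restriction to a closed interval [a₁,b₁] is a negative shell with image Σ₁ = γ₁([a₁,b₁]). Then there exists a μ-circle C such that Σ₁ is contained in the closure of the interior domain of C and the intersection C ∩ Σ₁ consists of exactly two points. -/

import Mathlib

noncomputable section

open Matrix

/-- Euclidean 3-space (as triples of reals). -/
abbrev R3 : Type := Fin 3 → ℝ

/-- The Euclidean inner product on ℝ³. -/
def dot3 (a b : R3) : ℝ := a 0 * b 0 + a 1 * b 1 + a 2 * b 2

/-- The Euclidean norm on ℝ³. -/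
def norm3 (a : R3) : ℝ := Real.sqrt (dot3 a a)

/-- The cross product on ℝ³. -/
def cross3 (a b : R3) : R3 :=
  ![a 1 * b 2 - a 2 * b 1, a 2 * b 0 - a 0 * b 2, a 0 * b 1 - a 1 * b 0]

/-- The determinant of three vectors in ℝ³. -/
def det3 (a b c : R3) : ℝ := dot3 a (cross3 b c)

/-- `γ : ℝ → ℝ³` is a regular curve in the unit sphere S²:
it is smooth, takes values in S², and has nowhere-vanishing derivative. -/
structure IsRegularCurve (γ : ℝ → R3) : Prop where
  smooth : ContDiff ℝ (⊤ : ℕ∞) γ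
  sphere : ∀ s, dot3 (γ s) (γ s) = 1
  reg : ∀ s, deriv γ s ≠ 0

/-- The geodesic curvature `κ(s) = det(γ, γ', γ'')/|γ'|³` of a curve in S². -/
def kappa (γ : ℝ → R3) (s : ℝ) : ℝ :=
  det3 (γ s) (deriv γ s) (deriv (deriv γ) s) / norm3 (deriv γ s) ^ 3

/-- The unit normal `n(s) = (γ × γ')/|γ'|` of a curve in S². -/
def unitNormal (γ : ℝ → R3) (s : ℝ) : R3 :=
  (norm3 (deriv γ s))⁻¹ • cross3 (γ s) (deriv γ s)

/-- `γ` is closed of period `l > 0`. -/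
def HasPeriod (γ : ℝ → R3) (l : ℝ) : Prop := 0 < l ∧ ∀ s, γ (s + l) = γ s

/-- 2×2 complex matrices. -/
abbrev Mat2 := Matrix (Fin 2) (Fin 2) ℂ

def E1 : Mat2 := !![0, Complex.I; Complex.I, 0]
def E2 : Mat2 := !![0, -1; 1, 0]
def E3 : Mat2 := !![Complex.I, 0; 0, -Complex.I]

/-- The identification of ℝ³ with su(2) via the orthonormal basis e₁, e₂, e₃. -/
def toSu2 (v : R3) : Mat2 := (v 0 : ℂ) • E1 + (v 1 : ℂ) • E2 + (v 2 : ℂ) • E3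

/-- The adjoint action `Ad(a)x = a x a⁻¹`. -/
def AdM (a x : Mat2) : Mat2 := a * x * a⁻¹

/-- `c : ℝ → SU(2)` is a lift of the regular curve `γ` in S²:
it is smooth (entrywise), takes values in SU(2), and satisfies
`Ad(c(s))e₃ = γ(s)` and `Ad(c(s))e₁ = γ'(s)/|γ'(s)|` under `toSu2`. -/
structure IsLift (γ : ℝ → R3) (c : ℝ → Mat2) : Prop where
  mem : ∀ s, c s ∈ Matrix.specialUnitaryGroup (Fin 2) ℂ
  smooth : ∀ i j, ContDiff ℝ (⊤ : ℕ∞) fun s => c s i j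
  ad3 : ∀ s, AdM (c s) E3 = toSu2 (γ s)
  ad1 : ∀ s, AdM (c s) E1 = toSu2 ((norm3 (deriv γ s))⁻¹ • deriv γ s)

/-- The entrywise derivative of a matrix-valued curve. -/
def matDeriv (c : ℝ → Mat2) (s : ℝ) : Mat2 :=
  Matrix.of fun i j => deriv (fun t => c t i j) s

/-- The map `f_{γ₁,γ₂}(s₁,s₂) = c₁(0)⁻¹ c₁(s₁) c₂(s₂)⁻¹ c₂(0)` associated to lifts `c₁, c₂`. -/
def fmap (c1 c2 : ℝ → Mat2) (s1 s2 : ℝ) : Mat2 :=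
  (c1 0)⁻¹ * c1 s1 * (c2 s2)⁻¹ * c2 0

/-- `(γ₁, γ₂)` is an admissible pair. -/
structure IsAdmissiblePair (γ1 γ2 : ℝ → R3) : Prop where
  reg1 : IsRegularCurve γ1
  reg2 : IsRegularCurve γ2
  param1 : ∀ s, norm3 (deriv γ1 s) ^ 2 * (1 + kappa γ1 s ^ 2) = 4
  param2 : ∀ s, norm3 (deriv γ2 s) ^ 2 * (1 + kappa γ2 s ^ 2) = 4
  curv : ∀ s1 s2, kappa γ2 s2 < kappa γ1 s1

/-- The restriction of `γ` to `[a,b]` is a shell. -/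
def IsShell (γ : ℝ → R3) (a b : ℝ) : Prop :=
  a < b ∧ Set.InjOn γ (Set.Ico a b) ∧ γ a = γ b ∧
    LinearIndependent ℝ ![deriv γ a, deriv γ b]

/-- A positive shell: `det(γ(a), γ'(a), γ'(b)) < 0`. -/
def IsPositiveShell (γ : ℝ → R3) (a b : ℝ) : Prop :=
  IsShell γ a b ∧ det3 (γ a) (deriv γ a) (deriv γ b) < 0

/-- A negative shell: `det(γ(a), γ'(a), γ'(b)) > 0`. -/
def IsNegativeShell (γ : ℝ → R3) (a b : ℝ) : Prop :=
  IsShell γ a b ∧ 0 < det3 (γ a) (deriv γ a) (deriv γ b)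

/-- The unit sphere S² in ℝ³. -/
def sphere2 : Set R3 := {x | dot3 x x = 1}

/-- The μ-circle with center `o ∈ S²`. -/
def muCircle (μ : ℝ) (o : R3) : Set R3 :=
  {x | dot3 x x = 1 ∧ dot3 x o = μ / Real.sqrt (1 + μ ^ 2)}

/-- The (open) interior domain of the μ-circle with center `o ∈ S²`. -/
def muDisk (μ : ℝ) (o : R3) : Set R3 :=
  {x | dot3 x x = 1 ∧ μ / Real.sqrt (1 + μ ^ 2) < dot3 x o}

def normalize3 (v : R3) : R3 := (norm3 v)⁻¹ • v

/-- `Δ` is the interior domain of the shell `γ|_{[a,b]}`: it is a connected component of the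
complement of the image of the shell in S², and for each `s ∈ (a,b)` the points obtained by
pushing `γ(s)` slightly in the direction `σ • n(s)` (σ = 1 for a positive shell, σ = -1 for a
negative shell) belong to `Δ`. -/
def IsInteriorDomain (γ : ℝ → R3) (a b σ : ℝ) (Δ : Set R3) : Prop :=
  (∃ p ∈ sphere2 \ γ '' Set.Icc a b,
      Δ = connectedComponentIn (sphere2 \ γ '' Set.Icc a b) p) ∧
    ∀ s ∈ Set.Ioo a b, ∃ ε > 0, ∀ δ ∈ Set.Ioo (0 : ℝ) ε,
      normalize3 (γ s + (σ * δ) • unitNormal γ s) ∈ Δ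

/-- The center `o_t = (μ γ(t) + n(t))/√(1+μ²)` of the tangent μ-circle to `γ` at `γ(t)`
on the normal side. -/
def tangentCenter (μ : ℝ) (γ : ℝ → R3) (t : ℝ) : R3 :=
  (Real.sqrt (1 + μ ^ 2))⁻¹ • (μ • γ t + unitNormal γ t)

/-- The rotation of ℝ³ through angle `θ` about the oriented (unit) axis `o`. -/
def rot3 (o : R3) (θ : ℝ) (x : R3) : R3 :=
  Real.cos θ • x + Real.sin θ • cross3 o x + ((1 - Real.cos θ) * dot3 o x) • o

/-- A closed regular curve of period `l` is generic: every self-intersection is a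
transversal double point. -/
def IsGeneric (γ : ℝ → R3) (l : ℝ) : Prop :=
  ∀ s t : ℝ, γ s = γ t → (¬∃ k : ℤ, s - t = k * l) →
    LinearIndependent ℝ ![deriv γ s, deriv γ t] ∧
      ∀ u : ℝ, γ u = γ s → (∃ k : ℤ, u - s = k * l) ∨ (∃ k : ℤ, u - t = k * l)

/-- The number of crossings (self-intersection points) of a closed curve of period `l`. -/
def crossings (γ : ℝ → R3) (l : ℝ) : ℕ :=
  Set.ncard {p : R3 | ∃ s t : ℝ, γ s = p ∧ γ t = p ∧ ¬∃ k : ℤ, s - t = k * l}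

/-- The spherical (geodesic) distance on S³, identified with SU(2):
`dist(A,B) = arccos(Re trace(A Bᴴ)/2)`, which corresponds to the round distance on the
unit sphere S³ ⊂ ℝ⁴. -/
def distS3 (A B : Mat2) : ℝ := Real.arccos ((Matrix.trace (A * Bᴴ)).re / 2)

/-- The extrinsic diameter of the image of the map `f` associated to the lifts `c₁, c₂`. -/
def extDiam (c1 c2 : ℝ → Mat2) : ℝ :=
  sSup {d : ℝ | ∃ s1 s2 u1 u2 : ℝ, d = distS3 (fmap c1 c2 s1 s2) (fmap c1 c2 u1 u2)}

/-- The parallel curve `γ^θ = (cos θ) γ + (sin θ) n`. -/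
def parallelCurve (γ : ℝ → R3) (θ : ℝ) (s : ℝ) : R3 :=
  Real.cos θ • γ s + Real.sin θ • unitNormal γ s

/-- The arclength-type parameter `s(t) = (1/2)∫₀ᵗ |γ'(u)|√(1+κ(u)²) du`. -/
def arcParam (γ : ℝ → R3) (t : ℝ) : ℝ :=
  (1 / 2) * ∫ u in (0 : ℝ)..t, norm3 (deriv γ u) * Real.sqrt (1 + kappa γ u ^ 2)

section Frame

open Filter Topology

lemma dot3_comm (a b : R3) : dot3 a b = dot3 b a := by
  simp only [dot3]; ring

lemma dot3_add_left (a b z : R3) : dot3 (a + b) z = dot3 a z + dot3 b z := by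
  simp only [dot3, Pi.add_apply]; ring

lemma dot3_smul_left (r : ℝ) (a z : R3) : dot3 (r • a) z = r * dot3 a z := by
  simp only [dot3, Pi.smul_apply, smul_eq_mul]; ring

lemma dot3_add_right (z a b : R3) : dot3 z (a + b) = dot3 z a + dot3 z b := by
  simp only [dot3, Pi.add_apply]; ring

lemma dot3_sub_right (z a b : R3) : dot3 z (a - b) = dot3 z a - dot3 z b := by
  simp only [dot3, Pi.sub_apply]; ring

lemma dot3_sub_left (a b z : R3) : dot3 (a - b) z = dot3 a z - dot3 b z := by
  simp only [dot3, Pi.sub_apply]; ring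

lemma dot3_neg_right (z a : R3) : dot3 z (-a) = -dot3 z a := by
  simp only [dot3, Pi.neg_apply]; ring

lemma dot3_neg_left (a z : R3) : dot3 (-a) z = -dot3 a z := by
  simp only [dot3, Pi.neg_apply]; ring

lemma dot3_smul_right (r : ℝ) (z a : R3) : dot3 z (r • a) = r * dot3 z a := by
  simp only [dot3, Pi.smul_apply, smul_eq_mul]; ring

lemma eq_zero_of_dot3_self {a : R3} (h : dot3 a a = 0) : a = 0 := by
  simp only [dot3] at h
  have h0 := mul_self_nonneg (a 0)
  have h1 := mul_self_nonneg (a 1)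
  have h2 := mul_self_nonneg (a 2)
  ext i
  fin_cases i <;> exact mul_self_eq_zero.mp (by simp only [Fin.zero_eta, Fin.mk_one, Fin.reduceFinMk]; linarith)

lemma eq_of_dot3_eq_one {a b : R3} (ha : dot3 a a = 1) (hb : dot3 b b = 1)
    (hab : dot3 a b = 1) : a = b := by
  rw [← sub_eq_zero]
  apply eq_zero_of_dot3_self
  rw [dot3_sub_left, dot3_sub_right, dot3_sub_right, dot3_comm b a]
  linarith

lemma Continuous.dot3 {X : Type*} [TopologicalSpace X] {f g : X → R3}
    (hf : Continuous f) (hg : Continuous g) : Continuous fun p => dot3 (f p) (g p) := by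
  unfold _root_.dot3
  fun_prop

lemma HasDerivAt.dot3 {f g : ℝ → R3} {f' g' : R3} {t : ℝ}
    (hf : HasDerivAt f f' t) (hg : HasDerivAt g g' t) :
    HasDerivAt (fun s => dot3 (f s) (g s)) (dot3 f' (g t) + dot3 (f t) g') t := by
  rw [hasDerivAt_pi] at hf hg
  have := (((hf 0).mul (hg 0)).add ((hf 1).mul (hg 1))).add ((hf 2).mul (hg 2))
  unfold _root_.dot3
  exact this.congr_deriv (by ring)

lemma deriv_nonpos_of_le_left {f : ℝ → ℝ} {f' s : ℝ} (hf : HasDerivAt f f' s)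
    (h : ∀ᶠ r in 𝓝[<] s, f s ≤ f r) : f' ≤ 0 := by
  have h1 := (hasDerivWithinAt_iff_tendsto_slope' (by simp)).mp
    (hf.hasDerivWithinAt (s := Set.Iio s))
  refine le_of_tendsto h1 ?_
  filter_upwards [h, self_mem_nhdsWithin] with r hr hrs
  rw [slope_def_field]
  exact div_nonpos_of_nonneg_of_nonpos (by linarith) (by linarith [Set.mem_Iio.mp hrs])

lemma deriv_nonneg_of_le_right {f : ℝ → ℝ} {f' s : ℝ} (hf : HasDerivAt f f' s)
    (h : ∀ᶠ r in 𝓝[>] s, f s ≤ f r) : 0 ≤ f' := by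
  have h1 := (hasDerivWithinAt_iff_tendsto_slope' (by simp)).mp
    (hf.hasDerivWithinAt (s := Set.Ioi s))
  refine ge_of_tendsto h1 ?_
  filter_upwards [h, self_mem_nhdsWithin] with r hr hrs
  rw [slope_def_field]
  exact div_nonneg (by linarith) (by linarith [Set.mem_Ioi.mp hrs])

/-- A moving frame `(x, T, n)` along a spherical curve `x` of speed `v` and geodesic curvature
`k / v > c / d`, with derivatives given in weak form. The orientation of the frame plays no role. -/
structure SphericalFrame (c d : ℝ) (x T n : ℝ → R3) (v k : ℝ → ℝ) : Prop where
  c_pos : 0 < c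
  d_pos : 0 < d
  cd : c ^ 2 + d ^ 2 = 1
  cont_x : Continuous x
  cont_T : Continuous T
  cont_n : Continuous n
  parseval : ∀ s z w, dot3 z w = dot3 z (x s) * dot3 w (x s) + dot3 z (T s) * dot3 w (T s) +
    dot3 z (n s) * dot3 w (n s)
  xx : ∀ s, dot3 (x s) (x s) = 1
  TT : ∀ s, dot3 (T s) (T s) = 1
  nn : ∀ s, dot3 (n s) (n s) = 1
  xT : ∀ s, dot3 (x s) (T s) = 0
  xn : ∀ s, dot3 (x s) (n s) = 0
  Tn : ∀ s, dot3 (T s) (n s) = 0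
  deriv_x : ∀ z s, HasDerivAt (fun r => dot3 z (x r)) (v s * dot3 z (T s)) s
  deriv_T : ∀ z s, HasDerivAt (fun r => dot3 z (T r)) (k s * dot3 z (n s) - v s * dot3 z (x s)) s
  deriv_n : ∀ z s, HasDerivAt (fun r => dot3 z (n r)) (-k s * dot3 z (T s)) s
  v_pos : ∀ s, 0 < v s
  curv : ∀ s, c * v s < d * k s

/-- The center of the circle tangent to `x` on the side of `n`. -/
def frameCenter (c d : ℝ) (x n : ℝ → R3) (s : ℝ) : R3 := c • x s + d • n s

namespace SphericalFrame

variable {c d : ℝ} {x T n : ℝ → R3} {v k : ℝ → ℝ}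

lemma dot_center (z : R3) (s : ℝ) :
    dot3 z (frameCenter c d x n s) = c * dot3 z (x s) + d * dot3 z (n s) := by
  rw [frameCenter, dot3_add_right, dot3_smul_right, dot3_smul_right]

lemma cont_center (F : SphericalFrame c d x T n v k) : Continuous (frameCenter c d x n) :=
  (F.cont_x.const_smul c).add (F.cont_n.const_smul d)

lemma deriv_center (F : SphericalFrame c d x T n v k) (z : R3) (s : ℝ) :
    HasDerivAt (fun r => dot3 z (frameCenter c d x n r))
      ((c * v s - d * k s) * dot3 z (T s)) s := by
  simp only [dot_center]
  exact (((F.deriv_x z s).const_mul c).add ((F.deriv_n z s).const_mul d)).congr_deriv (by ring)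

lemma x_dot_center (F : SphericalFrame c d x T n v k) (s : ℝ) :
    dot3 (x s) (frameCenter c d x n s) = c := by
  rw [dot_center, F.xx, F.xn]; ring

lemma T_dot_center (F : SphericalFrame c d x T n v k) (s : ℝ) :
    dot3 (T s) (frameCenter c d x n s) = 0 := by
  rw [dot_center, dot3_comm, F.xT, F.Tn]; ring

lemma center_unit (F : SphericalFrame c d x T n v k) (s : ℝ) :
    dot3 (frameCenter c d x n s) (frameCenter c d x n s) = 1 := by
  rw [dot_center, dot3_comm, F.x_dot_center, dot3_comm _ (n s), dot_center, dot3_comm, F.xn, F.nn]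
  linear_combination F.cd

/-- The curve of centers carries a frame whose own centers are the points of `x`. -/
lemma dual (F : SphericalFrame c d x T n v k) :
    SphericalFrame c d (frameCenter c d x n) (fun s => -T s) (fun s => d • x s - c • n s)
      (fun s => d * k s - c * v s) (fun s => d * v s + c * k s) where
  c_pos := F.c_pos
  d_pos := F.d_pos
  cd := F.cd
  cont_x := F.cont_center
  cont_T := F.cont_T.neg
  cont_n := (F.cont_x.const_smul d).sub (F.cont_n.const_smul c)
  parseval s z w := by
    rw [F.parseval s z w]
    simp only [dot_center, dot3_neg_right, dot3_sub_right, dot3_smul_right]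
    linear_combination (-(dot3 z (x s) * dot3 w (x s)) - dot3 z (n s) * dot3 w (n s)) * F.cd
  xx := F.center_unit
  TT s := by rw [dot3_neg_left, dot3_neg_right, F.TT]; ring
  nn s := by
    simp only [dot3_sub_left, dot3_sub_right, dot3_smul_left, dot3_smul_right, F.xx, F.nn, F.xn,
      dot3_comm (n s) (x s)]
    linear_combination F.cd
  xT s := by rw [dot3_neg_right, dot3_comm, F.T_dot_center, neg_zero]
  xn s := by
    rw [dot3_comm, dot_center]
    simp only [dot3_sub_left, dot3_smul_left, F.xx, F.nn, F.xn, dot3_comm (n s) (x s)]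
    ring
  Tn s := by
    simp only [dot3_neg_left, dot3_sub_right, dot3_smul_right, F.Tn, dot3_comm (T s) (x s), F.xT]
    ring
  deriv_x z s := by
    convert F.deriv_center z s using 1
    rw [dot3_neg_right]; ring
  deriv_T z s := by
    simp only [dot_center, dot3_neg_right, dot3_sub_right, dot3_smul_right]
    refine (F.deriv_T z s).neg.congr_deriv ?_
    linear_combination (k s * dot3 z (n s) - v s * dot3 z (x s)) * F.cd
  deriv_n z s := by
    simp only [dot3_neg_right, dot3_sub_right, dot3_smul_right]
    exact (((F.deriv_x z s).const_mul d).sub ((F.deriv_n z s).const_mul c)).congr_deriv (by ring)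
  v_pos s := by linarith [F.curv s]
  curv s := by
    have : 0 < (c ^ 2 + d ^ 2) * v s := by rw [F.cd, one_mul]; exact F.v_pos s
    linarith

lemma dual_center (F : SphericalFrame c d x T n v k) (s : ℝ) :
    frameCenter c d (frameCenter c d x n) (fun s => d • x s - c • n s) s = x s := by
  ext i
  simp only [frameCenter, Pi.add_apply, Pi.sub_apply, Pi.smul_apply, smul_eq_mul]
  linear_combination x s i * F.cd

/-- If the point `z` of the circle around `frameCenter s` opposite to `x s` were in all nearby
tangent disks, the curvature bound would be violated; so `z` has to be `x s`. -/
lemma eq_of_min_left (F : SphericalFrame c d x T n v k) {z : R3} {s : ℝ} (hz : dot3 z z = 1)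
    (h0 : dot3 z (frameCenter c d x n s) = c) (hT : dot3 z (T s) = 0)
    (hmin : ∀ᶠ r in 𝓝[<] s, c ≤ dot3 z (frameCenter c d x n r)) : z = x s := by
  by_contra hne
  have hp : dot3 z (x s) ≠ 1 := fun h => hne (eq_of_dot3_eq_one hz (F.xx s) h)
  have hpar := F.parseval s z z
  rw [hz, hT] at hpar
  rw [dot_center] at h0
  set p := dot3 z (x s) with hpdef
  set q := dot3 z (n s) with hqdef
  have hc := F.c_pos
  have hd := F.d_pos
  have hv := F.v_pos s
  have hk := F.curv s
  have hcd := F.cd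
  have hp1 : (1 - p) * (d ^ 2 * (1 + p) - c ^ 2 * (1 - p)) = 0 := by
    linear_combination d ^ 2 * hpar + (d * q + c * (1 - p)) * h0
  have hp2 : p = c ^ 2 - d ^ 2 := by
    rcases mul_eq_zero.mp hp1 with h | h
    · exact absurd (by linarith) hp
    · linear_combination h - p * hcd
  have hq : q = 2 * c * d := by
    have : d * (q - 2 * c * d) = 0 := by
      rw [hp2] at h0
      linear_combination h0 - c * hcd
    rcases mul_eq_zero.mp this with h | h <;> linarith
  have hpos : 0 < k s * q - v s * p := by
    rw [hq, hp2]
    have : 0 < (c ^ 2 + d ^ 2) * v s := by rw [hcd, one_mul]; exact hv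
    nlinarith
  have hslope := (hasDerivWithinAt_iff_tendsto_slope' (by simp)).mp
    ((F.deriv_T z s).hasDerivWithinAt (s := Set.Iio s))
  have hneg : ∀ᶠ r in 𝓝[<] s, dot3 z (T r) < 0 := by
    filter_upwards [hslope.eventually (lt_mem_nhds hpos), self_mem_nhdsWithin] with r hr hrs
    rw [slope_def_field, hT, sub_zero] at hr
    have hrs' : r - s < 0 := by linarith [Set.mem_Iio.mp hrs]
    by_contra hcon
    exact absurd (div_nonpos_of_nonneg_of_nonpos (not_lt.mp hcon) hrs'.le) (not_le.mpr hr)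
  obtain ⟨l, hl, hls⟩ := (mem_nhdsLT_iff_exists_Ioo_subset).mp (hneg.and hmin)
  have hl' : l < s := hl
  have hmono : StrictMonoOn (fun r => dot3 z (frameCenter c d x n r)) (Set.Icc ((l + s) / 2) s) := by
    refine strictMonoOn_of_deriv_pos (convex_Icc _ _)
      (continuous_const.dot3 F.cont_center).continuousOn fun r hr => ?_
    rw [interior_Icc] at hr
    rw [(F.deriv_center z r).deriv]
    have := (hls ⟨by linarith [hr.1], hr.2⟩).1
    exact mul_pos_of_neg_of_neg (by linarith [F.curv r]) this
  have h1 := hmono ⟨le_rfl, by linarith⟩ ⟨by linarith, le_rfl⟩ (show (l + s) / 2 < s by linarith)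
  have h2 := (hls (show (l + s) / 2 ∈ Set.Ioo l s from ⟨by linarith, by linarith⟩)).2
  simp only [dot_center] at h1 h2
  linarith

lemma eq_of_isLocalMin (F : SphericalFrame c d x T n v k) {z : R3} {s : ℝ} (hz : dot3 z z = 1)
    (h0 : dot3 z (frameCenter c d x n s) = c)
    (hmin : ∀ᶠ r in 𝓝 s, c ≤ dot3 z (frameCenter c d x n r)) : z = x s := by
  refine F.eq_of_min_left hz h0 ?_ (hmin.filter_mono nhdsWithin_le_nhds)
  have h1 : IsLocalMin (fun r => dot3 z (frameCenter c d x n r)) s := by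
    simpa only [IsLocalMin, IsMinFilter, h0] using hmin
  have h2 := h1.hasDerivAt_eq_zero (F.deriv_center z s)
  rcases mul_eq_zero.mp h2 with h | h
  · linarith [F.curv s]
  · exact h

lemma eq_center_of_isLocalMin (F : SphericalFrame c d x T n v k) {z : R3} {t : ℝ}
    (hz : dot3 z z = 1) (h0 : dot3 z (x t) = c) (hmin : ∀ᶠ r in 𝓝 t, c ≤ dot3 z (x r)) :
    z = frameCenter c d x n t :=
  F.dual.eq_of_isLocalMin hz (by rw [F.dual_center]; exact h0) (by simpa only [F.dual_center])

/-- Two disks of the same radius whose circles meet at `x s`, the second one not being entered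
backwards: the part of the first circle behind `x s` leaves the second disk. -/
lemma lens (F : SphericalFrame c d x T n v k) {s e : ℝ} {o z : R3} (he : e ^ 2 = 1)
    (ho : dot3 o o = 1) (hz : dot3 z z = 1) (hxo : dot3 (x s) o = c)
    (hTo : 0 ≤ e * dot3 (T s) o)
    (hzo : dot3 z (frameCenter c d x n s) = c) (hzT : e * dot3 z (T s) ≤ 0)
    (hzo' : c ≤ dot3 z o) : o = frameCenter c d x n s ∨ z = x s := by
  have hc := F.c_pos
  have hd := F.d_pos
  have hpo := F.parseval s o o
  have hpz := F.parseval s z z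
  have hpzo := F.parseval s z o
  rw [dot_center] at hzo
  rw [dot3_comm] at hxo hTo
  rw [ho, hxo] at hpo
  rw [hz] at hpz
  rw [hxo] at hpzo
  by_cases hp : dot3 z (x s) = 1
  · exact Or.inr (eq_of_dot3_eq_one hz (F.xx s) hp)
  left
  set p := dot3 z (x s)
  set q := dot3 z (n s)
  set y := dot3 z (T s)
  set a := dot3 o (T s)
  set b := dot3 o (n s)
  have hcd := F.cd
  have hp1 : p < 1 := lt_of_le_of_ne (by nlinarith [sq_nonneg q, sq_nonneg y]) hp
  have hq : 0 < q := by
    by_contra hq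
    nlinarith [mul_nonneg hd.le (neg_nonneg.mpr (not_lt.mp hq)), mul_pos hc (sub_pos.mpr hp1)]
  have hya : y * a ≤ 0 := by
    have : (e * y) * (e * a) ≤ 0 := mul_nonpos_of_nonpos_of_nonneg hzT hTo
    have h2 : (e * y) * (e * a) = y * a := by linear_combination y * a * he
    linarith
  have hbd : d ≤ b := by
    by_contra hb
    have hb' : b < d := not_le.mp hb
    nlinarith [mul_pos hq (sub_pos.mpr hb')]
  have hb : b = d := by nlinarith [sq_nonneg a]
  refine eq_of_dot3_eq_one ho (F.center_unit s) ?_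
  rw [dot_center, hxo]
  change c * c + d * b = 1
  rw [hb]; linarith

/-- Near the diagonal, the curve is strictly inside its tangent disks. -/
lemma exists_near_diagonal (F : SphericalFrame c d x T n v k) (a b : ℝ) :
    ∃ ε > 0, ∀ s ∈ Set.Icc a b, ∀ t ∈ Set.Icc a b, s ≠ t → |s - t| < ε →
      c < dot3 (x t) (frameCenter c d x n s) := by
  obtain ⟨ε, hε, hT⟩ : ∃ ε > 0, ∀ s ∈ Set.Icc a b, ∀ t ∈ Set.Icc a b, |s - t| < ε →
      0 < dot3 (T s) (T t) := by
    have hcont : Continuous fun p : ℝ × ℝ => dot3 (T p.1) (T p.2) :=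
      (F.cont_T.comp continuous_fst).dot3 (F.cont_T.comp continuous_snd)
    have hK : IsCompact ((Set.Icc a b ×ˢ Set.Icc a b) ∩
        {p : ℝ × ℝ | dot3 (T p.1) (T p.2) ≤ 0}) :=
      (isCompact_Icc.prod isCompact_Icc).inter_right (isClosed_le hcont continuous_const)
    rcases Set.eq_empty_or_nonempty ((Set.Icc a b ×ˢ Set.Icc a b) ∩
        {p : ℝ × ℝ | dot3 (T p.1) (T p.2) ≤ 0}) with h | h
    · refine ⟨1, one_pos, fun s hs t ht _ => ?_⟩
      by_contra hcon
      exact Set.notMem_empty (s, t) (h ▸ ⟨⟨hs, ht⟩, not_lt.mp hcon⟩)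
    · obtain ⟨p, hp, hpmin⟩ := hK.exists_isMinOn h
        (show ContinuousOn (fun p : ℝ × ℝ => |p.1 - p.2|) _ by fun_prop)
      refine ⟨|p.1 - p.2|, abs_pos.mpr fun h0 => ?_, fun s hs t ht hst => ?_⟩
      · have h1 : dot3 (T p.1) (T p.2) ≤ 0 := hp.2
        rw [sub_eq_zero.mp h0, F.TT] at h1
        linarith
      · by_contra hcon
        exact absurd (hpmin (show (s, t) ∈ _ from ⟨⟨hs, ht⟩, not_lt.mp hcon⟩)) (not_le.mpr hst)
  have hmono : ∀ s ∈ Set.Icc a b, StrictMonoOn (fun t => dot3 (T s) (x t))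
      (Set.Icc a b ∩ Set.Ioo (s - ε) (s + ε)) := by
    intro s hs
    refine strictMonoOn_of_deriv_pos ((convex_Icc _ _).inter (convex_Ioo _ _))
      (continuous_const.dot3 F.cont_x).continuousOn fun r hr => ?_
    have hr' := interior_subset hr
    rw [(F.deriv_x (T s) r).deriv]
    exact mul_pos (F.v_pos r) (hT s hs r hr'.1
      (by rw [abs_lt]; constructor <;> linarith [hr'.2.1, hr'.2.2]))
  have hzero : ∀ s, dot3 (T s) (x s) = 0 := fun s => by rw [dot3_comm, F.xT]
  refine ⟨ε, hε, fun s hs t ht hne hst => ?_⟩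
  rw [abs_lt] at hst
  rcases lt_or_gt_of_ne hne with h | h
  · have hanti : StrictAntiOn (fun r => dot3 (x t) (frameCenter c d x n r)) (Set.Icc s t) := by
      refine strictAntiOn_of_deriv_neg (convex_Icc _ _)
        (continuous_const.dot3 F.cont_center).continuousOn fun r hr => ?_
      rw [interior_Icc] at hr
      rw [(F.deriv_center _ r).deriv, dot3_comm]
      have hrI : r ∈ Set.Icc a b := ⟨hs.1.trans hr.1.le, hr.2.le.trans ht.2⟩
      have := hmono r hrI ⟨hrI, by linarith, by linarith⟩
        ⟨ht, by linarith [hr.2], by linarith [hr.1]⟩ hr.2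
      simp only [hzero] at this
      exact mul_neg_of_neg_of_pos (by linarith [F.curv r]) this
    have := hanti ⟨le_rfl, h.le⟩ ⟨h.le, le_rfl⟩ h
    simpa only [F.x_dot_center] using this
  · have hmon : StrictMonoOn (fun r => dot3 (x t) (frameCenter c d x n r)) (Set.Icc t s) := by
      refine strictMonoOn_of_deriv_pos (convex_Icc _ _)
        (continuous_const.dot3 F.cont_center).continuousOn fun r hr => ?_
      rw [interior_Icc] at hr
      rw [(F.deriv_center _ r).deriv, dot3_comm]
      have hrI : r ∈ Set.Icc a b := ⟨ht.1.trans hr.1.le, hr.2.le.trans hs.2⟩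
      have := hmono r hrI ⟨ht, by linarith [hr.2], by linarith [hr.1]⟩
        ⟨hrI, by linarith, by linarith⟩ hr.1
      simp only [hzero] at this
      exact mul_pos_of_neg_of_neg (by linarith [F.curv r]) this
    have := hmon ⟨le_rfl, h.le⟩ ⟨h.le, le_rfl⟩ h
    simpa only [F.x_dot_center] using this

lemma exists_max_fst {K : Set (ℝ × ℝ)} (hK : IsCompact K) (hne : K.Nonempty) :
    ∃ p ∈ K, ∀ q ∈ K, q.1 ≤ p.1 :=
  hK.exists_isMaxOn hne continuous_fst.continuousOn

lemma exists_min_fst {K : Set (ℝ × ℝ)} (hK : IsCompact K) (hne : K.Nonempty) :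
    ∃ p ∈ K, ∀ q ∈ K, p.1 ≤ q.1 :=
  hK.exists_isMinOn hne continuous_fst.continuousOn

lemma le_of_forall_Ioo_right {f : ℝ → ℝ} (hf : Continuous f) {c s u : ℝ} (hsu : s < u)
    (h : ∀ r ∈ Set.Ioo s u, c ≤ f r) : c ≤ f s :=
  ge_of_tendsto (hf.continuousWithinAt (s := Set.Ioi s) (x := s))
    (by filter_upwards [Ioo_mem_nhdsGT hsu] with r hr using h r hr)

lemma le_of_forall_Ioo_left {f : ℝ → ℝ} (hf : Continuous f) {c u s : ℝ} (hus : u < s)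
    (h : ∀ r ∈ Set.Ioo u s, c ≤ f r) : c ≤ f s :=
  ge_of_tendsto (hf.continuousWithinAt (s := Set.Iio s) (x := s))
    (by filter_upwards [Ioo_mem_nhdsLT hus] with r hr using h r hr)

/-- The height of `x t` above the plane through the origin parallel to that of the circle tangent
at `x s`; the tangent disk at `x s` consists of the points of height at least `c`. -/
def height (c d : ℝ) (x n : ℝ → R3) (s t : ℝ) : ℝ := dot3 (x t) (frameCenter c d x n s)

lemma height_self (F : SphericalFrame c d x T n v k) (s : ℝ) : height c d x n s s = c :=
  F.x_dot_center s

lemma cont_height (F : SphericalFrame c d x T n v k) :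
    Continuous fun p : ℝ × ℝ => height c d x n p.1 p.2 :=
  (F.cont_x.comp continuous_snd).dot3 (F.cont_center.comp continuous_fst)

lemma cont_height_left (F : SphericalFrame c d x T n v k) (t : ℝ) :
    Continuous fun s => height c d x n s t :=
  continuous_const.dot3 F.cont_center

lemma cont_height_right (F : SphericalFrame c d x T n v k) (s : ℝ) :
    Continuous fun t => height c d x n s t :=
  F.cont_x.dot3 continuous_const

lemma deriv_height_right (F : SphericalFrame c d x T n v k) (s t : ℝ) :
    HasDerivAt (fun r => height c d x n s r) (v t * dot3 (T t) (frameCenter c d x n s)) t := by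
  simp only [height, dot3_comm _ (frameCenter c d x n s)]
  exact F.deriv_x _ t

lemma deriv_height_left (F : SphericalFrame c d x T n v k) (s t : ℝ) :
    HasDerivAt (fun r => height c d x n r t) ((c * v s - d * k s) * dot3 (x t) (T s)) s :=
  F.deriv_center _ s

lemma height_congr {s r : ℝ} (h : frameCenter c d x n s = frameCenter c d x n r) (t : ℝ) :
    height c d x n s t = height c d x n r t := by
  rw [height, height, h]

lemma isCompact_height_le (F : SphericalFrame c d x T n v k) {a b : ℝ} {S : Set (ℝ × ℝ)}
    (hS : IsClosed S) :
    IsCompact ((Set.Icc a b ×ˢ Set.Icc a b) ∩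
      (S ∩ {p : ℝ × ℝ | height c d x n p.1 p.2 ≤ c})) :=
  (isCompact_Icc.prod isCompact_Icc).inter_right
    (hS.inter (isClosed_le F.cont_height continuous_const))

/-- If `x` exits the tangent disk of its initial point, there is a last point `α` whose tangent
disk does not contain the future of the curve strictly; `τ` is the first time of contact. -/
lemma exists_last_contact (F : SphericalFrame c d x T n v k) {a b : ℝ}
    (hexit : ∃ t ∈ Set.Ioo a b, height c d x n a t < c) :
    ∃ α τ, a < α ∧ α < τ ∧ τ ≤ b ∧ (∀ s t, α < s → s < t → t ≤ b → c < height c d x n s t) ∧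
      height c d x n α τ = c ∧ ∀ t, α < t → t < τ → c < height c d x n α t := by
  obtain ⟨ε, hε, hdiag⟩ := F.exists_near_diagonal a b
  have hfar : ∀ s t, a ≤ s → s < t → t ≤ b → height c d x n s t ≤ c → s + ε ≤ t := by
    intro s t hs hst ht hle
    by_contra hcon
    refine absurd (hdiag s ⟨hs, by linarith⟩ t ⟨by linarith, ht⟩ hst.ne ?_) (not_lt.mpr hle)
    rw [abs_lt]; constructor <;> linarith
  have hK := F.isCompact_height_le (a := a) (b := b) (S := {p : ℝ × ℝ | p.1 + ε ≤ p.2})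
    (isClosed_le (by fun_prop) (by fun_prop))
  obtain ⟨t₀, ht₀, hat₀⟩ := hexit
  have hmem : ∀ s t, a ≤ s → s < t → t ≤ b → height c d x n s t ≤ c →
      (s, t) ∈ ((Set.Icc a b ×ˢ Set.Icc a b) ∩
        ({p : ℝ × ℝ | p.1 + ε ≤ p.2} ∩ {p : ℝ × ℝ | height c d x n p.1 p.2 ≤ c})) :=
    fun s t hs hst ht hle => ⟨⟨⟨hs, by linarith⟩, ⟨by linarith, ht⟩⟩, hfar s t hs hst ht hle, hle⟩
  obtain ⟨⟨α, t₁⟩, ⟨⟨hα, ht₁⟩, hαt₁, hle₁⟩, hmax⟩ :=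
    exists_max_fst hK ⟨_, hmem a t₀ le_rfl ht₀.1 ht₀.2.le hat₀.le⟩
  simp only [Set.mem_ofPred_eq] at hα ht₁ hαt₁ hle₁ hmax
  have hfwd : ∀ s t, α < s → s < t → t ≤ b → c < height c d x n s t := by
    intro s t hs hst ht
    by_contra hcon
    have := hmax _ (hmem s t (hα.1.trans hs.le) hst ht (not_lt.mp hcon))
    linarith
  have haα : a < α := by
    have h1 : ∀ᶠ s in 𝓝[>] a, height c d x n s t₀ < c :=
      ((F.cont_height_left t₀).continuousWithinAt (s := Set.Ioi a) (x := a)).eventually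
        (gt_mem_nhds hat₀)
    obtain ⟨s, hs, hs'⟩ := (h1.and (Ioo_mem_nhdsGT ht₀.1)).exists
    have := hmax _ (hmem s t₀ hs'.1.le hs'.2 ht₀.2.le hs.le)
    exact hs'.1.trans_le this
  have hge : ∀ t, α < t → t ≤ b → c ≤ height c d x n α t := fun t ht htb =>
    le_of_forall_Ioo_right (F.cont_height_left t) ht fun r hr => (hfwd r t hr.1 hr.2 htb).le
  have hZ : IsCompact (Set.Icc (α + ε) b ∩ {t | height c d x n α t ≤ c}) :=
    isCompact_Icc.inter_right (isClosed_le (F.cont_height_right α) continuous_const)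
  obtain ⟨τ, ⟨⟨hτ1, hτ2⟩, hτ3⟩, hτmin⟩ := hZ.exists_isLeast ⟨t₁, ⟨hαt₁, ht₁.2⟩, hle₁⟩
  refine ⟨α, τ, haα, by linarith, hτ2, hfwd, le_antisymm hτ3 (hge τ (by linarith) hτ2),
    fun t hαt htτ => ?_⟩
  by_contra hcon
  have := hτmin ⟨⟨hfar α t hα.1 hαt (by linarith) (not_lt.mp hcon), by linarith⟩, not_lt.mp hcon⟩
  linarith

/-- Between the two contact points of `exists_last_contact` the tangent disks also contain the
past of the curve. -/
lemma backward_of_contact (F : SphericalFrame c d x T n v k) {α τ : ℝ} (hατ : α < τ)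
    (hne : x τ ≠ x α)
    (hfwd : ∀ s t, α < s → s < t → t ≤ τ → c < height c d x n s t)
    (hcontact : height c d x n α τ = c) (hfirst : ∀ t, α < t → t < τ → c < height c d x n α t) :
    (frameCenter c d x n τ = frameCenter c d x n α ∧
      ∀ s t, α ≤ t → t < s → s < τ → c < height c d x n s t) ∨
    ∀ s t, α ≤ t → t < s → s ≤ τ → c < height c d x n s t := by
  obtain ⟨ε, hε, hdiag⟩ := F.exists_near_diagonal α τ
  have hmem : ∀ s t, α ≤ t → t < s → s ≤ τ → height c d x n s t ≤ c →
      (s, t) ∈ ((Set.Icc α τ ×ˢ Set.Icc α τ) ∩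
        ({p : ℝ × ℝ | p.2 + ε ≤ p.1} ∩ {p : ℝ × ℝ | height c d x n p.1 p.2 ≤ c})) := by
    intro s t ht hst hs hle
    refine ⟨⟨⟨by linarith, hs⟩, ⟨ht, by linarith⟩⟩, ?_, hle⟩
    by_contra hcon
    refine absurd (hdiag s ⟨by linarith, hs⟩ t ⟨ht, by linarith⟩ hst.ne' ?_) (not_lt.mpr hle)
    simp only [Set.mem_ofPred_eq, not_le] at hcon
    rw [abs_lt]; constructor <;> linarith
  rcases Set.eq_empty_or_nonempty ((Set.Icc α τ ×ˢ Set.Icc α τ) ∩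
        ({p : ℝ × ℝ | p.2 + ε ≤ p.1} ∩ {p : ℝ × ℝ | height c d x n p.1 p.2 ≤ c})) with h | h
  · right
    intro s t ht hst hs
    by_contra hcon
    exact Set.notMem_empty (s, t) (h ▸ hmem s t ht hst hs (not_lt.mp hcon))
  left
  have hK := F.isCompact_height_le (a := α) (b := τ) (S := {p : ℝ × ℝ | p.2 + ε ≤ p.1})
    (isClosed_le (by fun_prop) (by fun_prop))
  obtain ⟨⟨β, t₁⟩, ⟨⟨hβ, ht₁⟩, hβt₁, hle₁⟩, hmin⟩ := exists_min_fst hK h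
  simp only [Set.mem_ofPred_eq] at hβ ht₁ hβt₁ hle₁ hmin
  have hback : ∀ s t, α ≤ t → t < s → s < β → c < height c d x n s t := by
    intro s t ht hst hs
    by_contra hcon
    have := hmin _ (hmem s t ht hst (hs.le.trans hβ.2) (not_lt.mp hcon))
    linarith
  have hge : ∀ t, α ≤ t → t < β → c ≤ height c d x n β t := fun t ht htβ =>
    le_of_forall_Ioo_left (F.cont_height_left t) htβ fun r hr => (hback r t ht hr.1 hr.2).le
  have ht₁β : t₁ < β := by linarith
  have heq : height c d x n β t₁ = c := le_antisymm hle₁ (hge t₁ ht₁.1 ht₁β)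
  have htα : t₁ = α := by
    by_contra hcon
    have hαt₁ : α < t₁ := lt_of_le_of_ne ht₁.1 (Ne.symm hcon)
    have hc := F.eq_center_of_isLocalMin (F.center_unit β) (t := t₁)
      (by rw [dot3_comm]; exact heq)
      (by
        filter_upwards [Ioo_mem_nhds hαt₁ ht₁β] with r hr
        rw [dot3_comm]
        exact hge r hr.1.le hr.2)
    have h1 := hfwd t₁ β hαt₁ ht₁β hβ.2
    rw [← height_congr hc, F.height_self] at h1
    exact lt_irrefl _ h1
  subst htα
  have hT1 : 0 ≤ dot3 (T t₁) (frameCenter c d x n β) := by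
    have := deriv_nonneg_of_le_right (F.deriv_height_right β t₁) (by
      filter_upwards [Ioo_mem_nhdsGT ht₁β] with r hr
      rw [heq]
      exact hge r hr.1.le hr.2)
    exact nonneg_of_mul_nonneg_right this (F.v_pos t₁)
  have hT2 : dot3 (x τ) (T t₁) ≤ 0 := by
    have := deriv_nonneg_of_le_right (F.deriv_height_left t₁ τ) (by
      filter_upwards [Ioo_mem_nhdsGT hατ] with r hr
      rw [hcontact]
      exact (hfwd r τ hr.1 hr.2 le_rfl).le)
    nlinarith [F.curv t₁]
  have hτβ : c ≤ height c d x n β τ := by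
    rcases hβ.2.eq_or_lt with h | h
    · rw [h, F.height_self]
    · exact (hfwd β τ ht₁β h le_rfl).le
  have ho : frameCenter c d x n β = frameCenter c d x n t₁ :=
    (F.lens (e := 1) (by norm_num) (F.center_unit β) (F.xx τ) heq (by simpa using hT1) hcontact
      (by simpa using hT2) hτβ).resolve_right hne
  have hβτ : β = τ := by
    by_contra hcon
    have h1 := hfwd β τ ht₁β (lt_of_le_of_ne hβ.2 hcon) le_rfl
    rw [height_congr ho, hcontact] at h1
    exact lt_irrefl _ h1
  subst hβτ
  exact ⟨ho, hback⟩

/-- A convex arc `[α, b]` with `x b` on the tangent circle at `α` cannot be the end of a simple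
arc whose past exits the tangent disk at `b`. -/
lemma not_exits_backward (F : SphericalFrame c d x T n v k) {a α b : ℝ} (hαb : α < b)
    (hinj : Set.InjOn x (Set.Ioo a b)) (hneb : ∀ t, a < t → t < b → x t ≠ x b)
    (hcontact : height c d x n α b = c) (hfirst : ∀ t, α < t → t < b → c < height c d x n α t)
    (hback : ∀ s t, α ≤ t → t < s → s ≤ b → c < height c d x n s t)
    {t₀ : ℝ} (hat₀ : a < t₀) (ht₀ : t₀ < b) : c ≤ height c d x n b t₀ := by
  by_contra hexit
  rw [not_le] at hexit
  obtain ⟨ε, hε, hdiag⟩ := F.exists_near_diagonal t₀ b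
  have hmem : ∀ s t, t₀ ≤ t → t < s → s ≤ b → height c d x n s t ≤ c →
      t + ε ≤ s := by
    intro s t ht hst hs hle
    by_contra hcon
    refine absurd (hdiag s ⟨by linarith, hs⟩ t ⟨ht, by linarith⟩ hst.ne' ?_) (not_lt.mpr hle)
    rw [abs_lt]; constructor <;> linarith
  have hK : IsCompact (Prod.swap '' ((Set.Icc t₀ b ×ˢ Set.Icc t₀ b) ∩
        ({p : ℝ × ℝ | p.2 + ε ≤ p.1} ∩ {p : ℝ × ℝ | height c d x n p.1 p.2 ≤ c}))) :=
    (F.isCompact_height_le (isClosed_le (by fun_prop) (by fun_prop))).image continuous_swap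
  have hmem' : ∀ s t, t₀ ≤ t → t < s → s ≤ b → height c d x n s t ≤ c →
      (t, s) ∈ Prod.swap '' ((Set.Icc t₀ b ×ˢ Set.Icc t₀ b) ∩
        ({p : ℝ × ℝ | p.2 + ε ≤ p.1} ∩ {p : ℝ × ℝ | height c d x n p.1 p.2 ≤ c})) :=
    fun s t ht hst hs hle => ⟨(s, t), ⟨⟨⟨by linarith, hs⟩, ⟨ht, by linarith⟩⟩,
      hmem s t ht hst hs hle, hle⟩, rfl⟩
  obtain ⟨p, ⟨⟨s, t⟩, ⟨⟨hs, ht⟩, hts, hle⟩, rfl⟩, hmax⟩ :=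
    exists_max_fst hK ⟨_, hmem' b t₀ le_rfl ht₀ le_rfl hexit.le⟩
  simp only [Set.mem_ofPred_eq, Prod.fst_swap] at hs ht hts hle hmax
  have hst : t < s := by linarith
  have htb : t < b := hst.trans_le hs.2
  have hat : a < t := hat₀.trans_le ht.1
  have hpos : ∀ s' t', t < t' → t' < s' → s' ≤ b → c < height c d x n s' t' := by
    intro s' t' ht' hst' hs'
    by_contra hcon
    have := hmax _ (hmem' s' t' (by linarith [ht.1]) hst' hs' (not_lt.mp hcon))
    linarith
  have hge : ∀ s', t < s' → s' ≤ b → c ≤ height c d x n s' t := fun s' hs' hsb =>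
    le_of_forall_Ioo_right (F.cont_height_right s') hs' fun r hr => (hpos s' r hr.1 hr.2 hsb).le
  have hsb : s = b := by
    by_contra hcon
    have hsb : s < b := lt_of_le_of_ne hs.2 hcon
    have := F.eq_of_isLocalMin (F.xx t) (le_antisymm hle (hge s hst hs.2)) (by
      filter_upwards [Ioo_mem_nhds hst hsb] with r hr using hge r hr.1 hr.2.le)
    exact hst.ne (hinj ⟨hat, htb⟩ ⟨hat.trans hst, hsb⟩ this)
  subst hsb
  have htα : t < α := by
    by_contra hcon
    exact absurd (hback s t (not_lt.mp hcon) hst le_rfl) (not_lt.mpr hle)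
  have heq : height c d x n s t = c := le_antisymm hle (hge s hst le_rfl)
  have hT1 : dot3 (T s) (frameCenter c d x n α) ≤ 0 := by
    have := deriv_nonpos_of_le_left (F.deriv_height_right α s) (by
      filter_upwards [Ioo_mem_nhdsLT hαb] with r hr
      rw [hcontact]
      exact (hfirst r hr.1 hr.2).le)
    nlinarith [F.v_pos s]
  have hT2 : 0 ≤ dot3 (x t) (T s) := by
    have := deriv_nonpos_of_le_left (F.deriv_height_left s t) (by
      filter_upwards [Ioo_mem_nhdsLT hst] with r hr
      rw [heq]
      exact hge r hr.1 hr.2.le)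
    nlinarith [F.curv s]
  rcases F.lens (s := s) (e := -1) (by norm_num) (F.center_unit α) (F.xx t) hcontact
      (by linarith) heq (by linarith) (hge α htα hαb.le) with h | h
  · have h1 := hback s α le_rfl hαb le_rfl
    rw [← height_congr h, F.height_self] at h1
    exact lt_irrefl _ h1
  · exact hneb t hat htb h

/-- A disk tangent at both ends of a convex arc contains the past of the arc. -/
lemma bitangent_backward (F : SphericalFrame c d x T n v k) {a α τ : ℝ} (hατ : α < τ)
    (hinj : Set.InjOn x (Set.Ico a τ)) (hne : x τ ≠ x α)
    (ho : frameCenter c d x n τ = frameCenter c d x n α)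
    (hback : ∀ s t, α ≤ t → t < s → s < τ → c < height c d x n s t)
    {t₀ : ℝ} (hat₀ : a ≤ t₀) (ht₀ : t₀ < α) : c < height c d x n α t₀ := by
  by_contra hexit
  rw [not_lt] at hexit
  obtain ⟨ε, hε, hdiag⟩ := F.exists_near_diagonal t₀ τ
  have hτα : height c d x n τ α = c := by rw [height_congr ho, F.height_self]
  have hT : 0 < dot3 (x α) (T τ) := by
    have hle : ∀ᶠ r in 𝓝[<] τ, c ≤ height c d x n r α := by
      filter_upwards [Ioo_mem_nhdsLT hατ] with r hr using (hback r α le_rfl hr.1 hr.2).le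
    have h1 := deriv_nonpos_of_le_left (F.deriv_height_left τ α) (by rwa [hτα])
    have h2 : 0 ≤ dot3 (x α) (T τ) := by nlinarith [F.curv τ]
    refine lt_of_le_of_ne h2 fun h0 => hne ?_
    exact (F.eq_of_min_left (F.xx α) hτα h0.symm hle).symm
  obtain ⟨η, hη, hball⟩ : ∃ η > 0, ∀ s t, |s - τ| < η → |t - α| < η → 0 < dot3 (x t) (T s) := by
    have hcont : Continuous fun p : ℝ × ℝ => dot3 (x p.2) (T p.1) :=
      (F.cont_x.comp continuous_snd).dot3 (F.cont_T.comp continuous_fst)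
    obtain ⟨η, hη, hb⟩ := Metric.eventually_nhds_iff.mp
      (hcont.continuousAt (x := (τ, α)) |>.eventually (lt_mem_nhds hT))
    refine ⟨η, hη, fun s t hs ht => hb (y := (s, t)) ?_⟩
    rw [Prod.dist_eq]
    exact max_lt hs ht
  have hfar : ∀ s t, t₀ ≤ t → t < s → s ≤ τ → height c d x n s t ≤ c → t + ε ≤ s := by
    intro s t ht hst hs hle
    by_contra hcon
    refine absurd (hdiag s ⟨by linarith, hs⟩ t ⟨ht, by linarith⟩ hst.ne' ?_) (not_lt.mpr hle)
    rw [abs_lt]; constructor <;> linarith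
  have hnear : ∀ s t, t₀ ≤ t → t < α → s ≤ τ → τ - min ε η < s → α - min ε η < t →
      c < height c d x n s t := by
    intro s t ht htα hsτ hs htη
    have hm1 := min_le_left ε η
    have hm2 := min_le_right ε η
    have hanti : StrictAntiOn (fun r => height c d x n r t) (Set.Icc s τ) := by
      refine strictAntiOn_of_deriv_neg (convex_Icc _ _)
        (F.cont_height_left t).continuousOn fun r hr => ?_
      rw [interior_Icc] at hr
      rw [(F.deriv_height_left r t).deriv]
      refine mul_neg_of_neg_of_pos (by linarith [F.curv r]) (hball r t ?_ ?_) <;> rw [abs_lt] <;>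
        constructor <;> linarith [hr.1, hr.2]
    have h1 : height c d x n τ t ≤ height c d x n s t :=
      hanti.antitoneOn ⟨le_rfl, hsτ⟩ ⟨hsτ, le_rfl⟩ hsτ
    have h2 := hdiag α ⟨ht₀.le, hατ.le⟩ t ⟨ht, by linarith⟩ htα.ne'
      (by rw [abs_lt]; constructor <;> linarith)
    rw [height_congr ho] at h1
    exact h2.trans_le h1
  have hδ : 0 < min ε η := lt_min hε hη
  set δ := min ε η
  have hS : IsClosed ({p : ℝ × ℝ | p.2 + ε ≤ p.1} ∩
      ({p | p.2 ≤ α} ∩ ({p | p.1 ≤ τ - δ} ∪ {p | p.2 ≤ α - δ}))) :=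
    (isClosed_le (by fun_prop) (by fun_prop)).inter
      ((isClosed_le (by fun_prop) (by fun_prop)).inter
        ((isClosed_le (by fun_prop) (by fun_prop)).union (isClosed_le (by fun_prop) (by fun_prop))))
  have hK := (F.isCompact_height_le (a := t₀) (b := τ) hS).image continuous_swap
  have hmem : ∀ s t, t₀ ≤ t → t < α → t < s → s ≤ τ → height c d x n s t ≤ c →
      (t, s) ∈ Prod.swap '' ((Set.Icc t₀ τ ×ˢ Set.Icc t₀ τ) ∩
        (({p : ℝ × ℝ | p.2 + ε ≤ p.1} ∩
            ({p | p.2 ≤ α} ∩ ({p | p.1 ≤ τ - δ} ∪ {p | p.2 ≤ α - δ}))) ∩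
          {p : ℝ × ℝ | height c d x n p.1 p.2 ≤ c})) := by
    intro s t ht htα hst hs hle
    refine ⟨(s, t), ⟨⟨⟨by linarith, hs⟩, ⟨ht, by linarith⟩⟩,
      ⟨hfar s t ht hst hs hle, htα.le, ?_⟩, hle⟩, rfl⟩
    simp only [Set.mem_union, Set.mem_ofPred_eq]
    by_contra! hcon
    exact absurd (hnear s t ht htα hs hcon.1 hcon.2) (not_lt.mpr hle)
  obtain ⟨p, ⟨⟨s, t⟩, ⟨⟨hs, ht⟩, ⟨hts, htα, hor⟩, hle⟩, rfl⟩, hmax⟩ :=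
    exists_max_fst hK ⟨_, hmem α t₀ le_rfl ht₀ ht₀ hατ.le hexit⟩
  simp only [Set.mem_ofPred_eq, Prod.fst_swap] at hs ht hts hle hmax htα
  simp only [Set.mem_union, Set.mem_ofPred_eq] at hor
  have hst : t < s := by linarith
  have htα' : t < α := by
    refine lt_of_le_of_ne htα fun h => ?_
    subst h
    rcases hor with h | h
    · exact absurd (hback s t le_rfl hst (by linarith)) (not_lt.mpr hle)
    · linarith
  have hpos : ∀ s' t', t < t' → t' < α → t' < s' → s' ≤ τ → c < height c d x n s' t' := by
    intro s' t' ht' htα' hst' hs'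
    by_contra hcon
    have := hmax _ (hmem s' t' (by linarith [ht.1]) htα' hst' hs' (not_lt.mp hcon))
    linarith
  have hge : ∀ s', t < s' → s' ≤ τ → c ≤ height c d x n s' t := fun s' hs' hsτ =>
    le_of_forall_Ioo_right (F.cont_height_right s') (lt_min hs' htα') fun r hr =>
      (hpos s' r hr.1 (hr.2.trans_le (min_le_right _ _)) (hr.2.trans_le (min_le_left _ _)) hsτ).le
  have hint : ∀ r, t < r → r < τ → height c d x n r t ≤ c → False := by
    intro r htr hrτ hr
    have := F.eq_of_isLocalMin (F.xx t) (le_antisymm hr (hge r htr hrτ.le)) (by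
      filter_upwards [Ioo_mem_nhds htr hrτ] with u hu using hge u hu.1 hu.2.le)
    exact htr.ne (hinj ⟨hat₀.trans ht.1, htr.trans hrτ⟩ ⟨by linarith [ht.1], hrτ⟩ this)
  rcases hs.2.eq_or_lt with h | h
  · refine hint α htα' hατ ?_
    rw [← height_congr ho, ← h]
    exact hle
  · exact hint s hst h hle

/-- A simple loop with corner at `x a = x b` as in a negative shell has a bitangent enclosing
disk. -/
lemma exists_bitangent (F : SphericalFrame c d x T n v k) {a b : ℝ} (hab : a < b)
    (hinj : Set.InjOn x (Set.Ico a b)) (hclosed : x a = x b)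
    (hTb : 0 < dot3 (T b) (n a)) (hTa : dot3 (T a) (n b) < 0) :
    ∃ α τ, a < α ∧ α < τ ∧ τ < b ∧ frameCenter c d x n τ = frameCenter c d x n α ∧
      ∀ t ∈ Set.Icc a b, t ≠ α → t ≠ τ → c < height c d x n α t := by
  have hneb : ∀ t, a < t → t < b → x t ≠ x b := fun t hat htb h =>
    hat.ne' (hinj ⟨hat.le, htb⟩ ⟨le_rfl, hab⟩ (h.trans hclosed.symm))
  have hexit : ∃ t ∈ Set.Ioo a b, height c d x n a t < c := by
    by_contra! hcon
    have h1 := deriv_nonpos_of_le_left (F.deriv_height_right a b) (by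
      filter_upwards [Ioo_mem_nhdsLT hab] with r hr
      rw [height, ← hclosed, F.x_dot_center]
      exact hcon r hr)
    rw [dot_center, hclosed, dot3_comm, F.xT] at h1
    nlinarith [mul_pos (F.v_pos b) (mul_pos F.d_pos hTb)]
  have hexit' : ∃ t ∈ Set.Ioo a b, height c d x n b t < c := by
    by_contra! hcon
    have h1 := deriv_nonneg_of_le_right (F.deriv_height_right b a) (by
      filter_upwards [Ioo_mem_nhdsGT hab] with r hr
      rw [height, hclosed, F.x_dot_center]
      exact hcon r hr)
    rw [dot_center, ← hclosed, dot3_comm, F.xT] at h1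
    nlinarith [mul_pos (F.v_pos a) (mul_pos F.d_pos (neg_pos.mpr hTa))]
  obtain ⟨α, τ, haα, hατ, hτb, hfwd, hcontact, hfirst⟩ := F.exists_last_contact hexit
  have hne : x τ ≠ x α := by
    rcases hτb.eq_or_lt with h | h
    · rw [h]; exact (hneb α haα (h ▸ hατ)).symm
    · exact fun h' => hατ.ne' (hinj ⟨(haα.trans hατ).le, h⟩ ⟨haα.le, hατ.trans h⟩ h')
  have hbi : frameCenter c d x n τ = frameCenter c d x n α ∧
      ∀ s t, α ≤ t → t < s → s < τ → c < height c d x n s t := by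
    rcases F.backward_of_contact hατ hne (fun s t h1 h2 h3 => hfwd s t h1 h2 (h3.trans hτb))
      hcontact hfirst with h | h
    · exact h
    rcases hτb.eq_or_lt with hb | hb
    · subst hb
      obtain ⟨t, ht, hlt⟩ := hexit'
      exact absurd (F.not_exits_backward hατ (hinj.mono Set.Ioo_subset_Ico_self) hneb hcontact
        hfirst h ht.1 ht.2) (not_le.mpr hlt)
    · refine ⟨?_, fun s t h1 h2 h3 => h s t h1 h2 h3.le⟩
      refine (F.eq_center_of_isLocalMin (F.center_unit α) (by rw [dot3_comm]; exact hcontact)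
        ?_).symm
      filter_upwards [Ioo_mem_nhds hατ hb] with r hr
      rw [dot3_comm]
      exact le_of_forall_Ioo_right (F.cont_height_left r) hr.1
        fun u hu => (hfwd u r hu.1 hu.2 hr.2.le).le
  obtain ⟨ho, hback⟩ := hbi
  have hpast : ∀ t, a ≤ t → t < α → c < height c d x n α t := fun t ht htα =>
    F.bitangent_backward hατ (hinj.mono (Set.Ico_subset_Ico_right hτb)) hne ho hback ht htα
  have hτb' : τ < b := by
    refine lt_of_le_of_ne hτb fun h => ?_
    have := hpast a le_rfl haα
    rw [height, hclosed, ← h] at this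
    exact lt_irrefl _ (this.trans_eq hcontact)
  refine ⟨α, τ, haα, hατ, hτb', ho, fun t ht htα htτ => ?_⟩
  rcases lt_or_gt_of_ne htα with h | h
  · exact hpast t ht.1 h
  rcases lt_or_gt_of_ne htτ with h' | h'
  · exact hfirst t h h'
  · rw [← height_congr ho]
    exact hfwd τ t hατ h' ht.2

end SphericalFrame

end Frame

lemma norm3_pos {a : R3} (h : a ≠ 0) : 0 < norm3 a := by
  refine Real.sqrt_pos.mpr (lt_of_le_of_ne ?_ fun h0 => h (eq_zero_of_dot3_self h0.symm))
  simp only [dot3]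
  nlinarith [mul_self_nonneg (a 0), mul_self_nonneg (a 1), mul_self_nonneg (a 2)]

lemma norm3_sq (a : R3) : norm3 a ^ 2 = dot3 a a := by
  refine Real.sq_sqrt ?_
  simp only [dot3]
  nlinarith [mul_self_nonneg (a 0), mul_self_nonneg (a 1), mul_self_nonneg (a 2)]

lemma cross3_smul_right (r : ℝ) (a b : R3) : cross3 a (r • b) = r • cross3 a b := by
  ext i
  fin_cases i <;> simp [cross3] <;> ring

lemma dot3_cross3_mul (x T z w : R3) :
    dot3 z (cross3 x T) * dot3 w (cross3 x T) =
      dot3 z w * (dot3 x x * dot3 T T - dot3 x T ^ 2) -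
      dot3 z x * (dot3 w x * dot3 T T - dot3 x T * dot3 w T) +
      dot3 z T * (dot3 w x * dot3 x T - dot3 x x * dot3 w T) := by
  simp only [dot3, cross3, cons_val_zero, cons_val_one, cons_val]
  ring

lemma dot3_cross3_left (x T : R3) : dot3 x (cross3 x T) = 0 := by
  simp only [dot3, cross3, cons_val_zero, cons_val_one, cons_val]
  ring

lemma dot3_cross3_right (x T : R3) : dot3 T (cross3 x T) = 0 := by
  simp only [dot3, cross3, cons_val_zero, cons_val_one, cons_val]
  ring

lemma HasDerivAt.cross3 {f g : ℝ → R3} {f' g' : R3} {t : ℝ}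
    (hf : HasDerivAt f f' t) (hg : HasDerivAt g g' t) :
    HasDerivAt (fun s => cross3 (f s) (g s)) (cross3 f' (g t) + cross3 (f t) g') t := by
  rw [hasDerivAt_pi] at hf hg ⊢
  intro i
  fin_cases i
  · exact (((hf 1).mul (hg 2)).sub ((hf 2).mul (hg 1))).congr_deriv (by simp [_root_.cross3]; ring)
  · exact (((hf 2).mul (hg 0)).sub ((hf 0).mul (hg 2))).congr_deriv (by simp [_root_.cross3]; ring)
  · exact (((hf 0).mul (hg 1)).sub ((hf 1).mul (hg 0))).congr_deriv (by simp [_root_.cross3]; ring)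

lemma Continuous.cross3 {X : Type*} [TopologicalSpace X] {f g : X → R3}
    (hf : Continuous f) (hg : Continuous g) : Continuous fun p => cross3 (f p) (g p) := by
  refine continuous_pi fun i => ?_
  fin_cases i <;> simp [_root_.cross3] <;> fun_prop

/-- The unit tangent of a curve. -/
def unitTangent (γ : ℝ → R3) (s : ℝ) : R3 := (norm3 (deriv γ s))⁻¹ • deriv γ s

namespace IsRegularCurve

variable {γ : ℝ → R3}

lemma differentiable (h : IsRegularCurve γ) : Differentiable ℝ γ :=
  h.smooth.differentiable (by simp)

lemma differentiable_deriv (h : IsRegularCurve γ) : Differentiable ℝ (deriv γ) :=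
  (contDiff_infty_iff_deriv.mp h.smooth).2.differentiable (by simp)

lemma speed_pos (h : IsRegularCurve γ) (s : ℝ) : 0 < norm3 (deriv γ s) := norm3_pos (h.reg s)

lemma deriv_eq (h : IsRegularCurve γ) (s : ℝ) :
    deriv γ s = norm3 (deriv γ s) • unitTangent γ s := by
  rw [unitTangent, smul_inv_smul₀ (h.speed_pos s).ne']

lemma hasDerivAt (h : IsRegularCurve γ) (s : ℝ) :
    HasDerivAt γ (norm3 (deriv γ s) • unitTangent γ s) s := by
  rw [← h.deriv_eq s]
  exact (h.differentiable s).hasDerivAt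

lemma unitNormal_eq : unitNormal γ = fun s => cross3 (γ s) (unitTangent γ s) := by
  funext s
  rw [unitNormal, unitTangent, cross3_smul_right]

lemma tangent_self (h : IsRegularCurve γ) (s : ℝ) :
    dot3 (unitTangent γ s) (unitTangent γ s) = 1 := by
  have := (h.speed_pos s).ne'
  rw [unitTangent, dot3_smul_left, dot3_smul_right, ← norm3_sq]
  field_simp

lemma dot_tangent (h : IsRegularCurve γ) (s : ℝ) : dot3 (γ s) (unitTangent γ s) = 0 := by
  have h1 := (h.hasDerivAt s).dot3 (h.hasDerivAt s)
  simp only [h.sphere, dot3_smul_left, dot3_smul_right] at h1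
  have h2 := h1.unique (hasDerivAt_const s 1)
  rw [dot3_comm (unitTangent γ s)] at h2
  have h3 := h.speed_pos s
  nlinarith

lemma parseval (h : IsRegularCurve γ) (s : ℝ) (z w : R3) :
    dot3 z w = dot3 z (γ s) * dot3 w (γ s) + dot3 z (unitTangent γ s) * dot3 w (unitTangent γ s) +
      dot3 z (unitNormal γ s) * dot3 w (unitNormal γ s) := by
  rw [unitNormal_eq, dot3_cross3_mul, h.sphere, h.tangent_self, h.dot_tangent]
  ring

lemma normal_self (h : IsRegularCurve γ) (s : ℝ) :
    dot3 (unitNormal γ s) (unitNormal γ s) = 1 := by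
  have h1 : ∀ x T : R3, dot3 (cross3 x T) (cross3 x T) =
      dot3 x x * dot3 T T - dot3 x T ^ 2 := by
    intro x T
    simp only [dot3, cross3, cons_val_zero, cons_val_one, cons_val]
    ring
  rw [unitNormal_eq, h1, h.sphere, h.tangent_self, h.dot_tangent]
  norm_num

lemma exists_hasDerivAt_tangent (h : IsRegularCurve γ) (s : ℝ) :
    ∃ r : ℝ, HasDerivAt (unitTangent γ)
      (r • deriv γ s + (norm3 (deriv γ s))⁻¹ • deriv (deriv γ) s) s := by
  have h1 := (h.differentiable_deriv s).hasDerivAt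
  have h2 := (h1.dot3 h1).sqrt (by rw [← norm3_sq]; exact (pow_pos (h.speed_pos s) 2).ne')
  have h3 : HasDerivAt (unitTangent γ) _ s := (h2.fun_inv (h.speed_pos s).ne').smul h1
  rw [add_comm] at h3
  exact ⟨_, h3⟩

lemma dot_deriv2_normal (h : IsRegularCurve γ) (s : ℝ) :
    dot3 (deriv (deriv γ) s) (unitNormal γ s) = norm3 (deriv γ s) ^ 2 * kappa γ s := by
  have h0 := (h.speed_pos s).ne'
  have h1 : det3 (γ s) (deriv γ s) (deriv (deriv γ) s) =
      dot3 (deriv (deriv γ) s) (cross3 (γ s) (deriv γ s)) := by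
    simp only [det3, dot3, cross3, cons_val_zero, cons_val_one, cons_val]
    ring
  rw [unitNormal, dot3_smul_right, kappa, h1]
  field_simp

lemma hasDerivAt_tangent (h : IsRegularCurve γ) (s : ℝ) :
    ∃ T', HasDerivAt (unitTangent γ) T' s ∧ ∀ z, dot3 z T' =
      norm3 (deriv γ s) * kappa γ s * dot3 z (unitNormal γ s) -
        norm3 (deriv γ s) * dot3 z (γ s) := by
  have h0 := (h.speed_pos s).ne'
  obtain ⟨r, hr⟩ := h.exists_hasDerivAt_tangent s
  refine ⟨_, hr, fun z => ?_⟩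
  have hn : dot3 (r • deriv γ s + (norm3 (deriv γ s))⁻¹ • deriv (deriv γ) s) (unitNormal γ s) =
      norm3 (deriv γ s) * kappa γ s := by
    rw [dot3_add_left, dot3_smul_left, dot3_smul_left, h.dot_deriv2_normal, unitNormal,
      dot3_smul_right, dot3_cross3_right]
    field_simp
    ring
  set T' := r • deriv γ s + (norm3 (deriv γ s))⁻¹ • deriv (deriv γ) s
  have hT : dot3 T' (unitTangent γ s) = 0 := by
    have h1 := hr.dot3 hr
    simp only [h.tangent_self] at h1
    have h2 := h1.unique (hasDerivAt_const s 1)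
    rw [dot3_comm (unitTangent γ s)] at h2
    linarith
  have hx : dot3 T' (γ s) = -norm3 (deriv γ s) := by
    have h1 := (h.hasDerivAt s).dot3 hr
    simp only [h.dot_tangent, dot3_smul_left, h.tangent_self] at h1
    have h2 := h1.unique (hasDerivAt_const s 0)
    rw [dot3_comm]
    linarith
  rw [h.parseval s z T', hn, hT, hx]
  ring

lemma sphericalFrame (h : IsRegularCurve γ) {μ : ℝ} (hμ : 0 < μ) (hκ : ∀ s, μ < kappa γ s) :
    SphericalFrame (μ / √(1 + μ ^ 2)) (√(1 + μ ^ 2))⁻¹ γ (unitTangent γ) (unitNormal γ)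
      (fun s => norm3 (deriv γ s)) fun s => norm3 (deriv γ s) * kappa γ s := by
  have hsq : 0 < √(1 + μ ^ 2) := Real.sqrt_pos.mpr (by positivity)
  have hsq2 : √(1 + μ ^ 2) ^ 2 = 1 + μ ^ 2 := Real.sq_sqrt (by positivity)
  have hT : Continuous (unitTangent γ) := continuous_iff_continuousAt.mpr fun s =>
    (h.hasDerivAt_tangent s).choose_spec.1.continuousAt
  exact
  { c_pos := by positivity
    d_pos := by positivity
    cd := by field_simp; rw [hsq2]; ring
    cont_x := h.smooth.continuous
    cont_T := hT
    cont_n := by rw [unitNormal_eq]; exact h.smooth.continuous.cross3 hT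
    parseval := h.parseval
    xx := h.sphere
    TT := h.tangent_self
    nn := h.normal_self
    xT := h.dot_tangent
    xn := fun s => by rw [unitNormal_eq]; exact dot3_cross3_left _ _
    Tn := fun s => by rw [unitNormal_eq]; exact dot3_cross3_right _ _
    deriv_x := fun z s => by
      refine ((hasDerivAt_const s z).dot3 (h.hasDerivAt s)).congr_deriv ?_
      simp [dot3]; ring
    deriv_T := fun z s => by
      obtain ⟨T', hT', hz⟩ := h.hasDerivAt_tangent s
      refine ((hasDerivAt_const s z).dot3 hT').congr_deriv ?_
      rw [← hz]
      simp [dot3]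
    deriv_n := fun z s => by
      obtain ⟨T', hT', hz⟩ := h.hasDerivAt_tangent s
      rw [unitNormal_eq]
      refine ((hasDerivAt_const s z).dot3 ((h.hasDerivAt s).cross3 hT')).congr_deriv ?_
      have h1 : ∀ v : ℝ, ∀ x T T' : R3, dot3 0 (cross3 x T) +
          dot3 z (cross3 (v • T) T + cross3 x T') = dot3 (cross3 z x) T' := by
        intro v x T T'
        simp only [dot3, cross3, cons_val_zero, cons_val_one, cons_val, Pi.zero_apply,
          Pi.add_apply, Pi.smul_apply, smul_eq_mul]
        ring
      have h2 : ∀ x T : R3, dot3 (cross3 z x) (cross3 x T) =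
          dot3 z x * dot3 x T - dot3 z T * dot3 x x := by
        intro x T
        simp only [dot3, cross3, cons_val_zero, cons_val_one, cons_val]
        ring
      rw [h1, hz, unitNormal_eq, h2, h.dot_tangent, h.sphere, dot3_comm (cross3 z _),
        dot3_cross3_right]
      ring
    v_pos := h.speed_pos
    curv := fun s => by
      have h1 := mul_lt_mul_of_pos_left (hκ s) (mul_pos (inv_pos.mpr hsq) (h.speed_pos s))
      calc _ = (√(1 + μ ^ 2))⁻¹ * norm3 (deriv γ s) * μ := by ring
        _ < _ := h1
        _ = _ := by ring }

end IsRegularCurve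

theorem stmt9 (μ : ℝ) (γ1 : ℝ → R3) (l a1 b1 : ℝ)
    (hμ : 0 < μ) (hreg : IsRegularCurve γ1) (hper : HasPeriod γ1 l)
    (hκ : ∀ s, μ < kappa γ1 s) (hint : b1 - a1 < l)
    (hshell : IsNegativeShell γ1 a1 b1) :
    ∃ o : R3, dot3 o o = 1 ∧ γ1 '' Set.Icc a1 b1 ⊆ closure (muDisk μ o) ∧
      ∃ P Q : R3, P ≠ Q ∧ muCircle μ o ∩ γ1 '' Set.Icc a1 b1 = {P, Q} := by
  obtain ⟨⟨hab, hinj, hclosed, -⟩, hdet⟩ := hshell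
  have F := hreg.sphericalFrame hμ hκ
  have hva := hreg.speed_pos a1
  have hvb := hreg.speed_pos b1
  have hTb : 0 < dot3 (unitTangent γ1 b1) (unitNormal γ1 a1) := by
    have : dot3 (unitTangent γ1 b1) (unitNormal γ1 a1) =
        (norm3 (deriv γ1 b1))⁻¹ * (norm3 (deriv γ1 a1))⁻¹ *
          det3 (γ1 a1) (deriv γ1 a1) (deriv γ1 b1) := by
      simp only [unitTangent, unitNormal, dot3_smul_left, dot3_smul_right]
      simp only [det3, dot3, cross3, cons_val_zero, cons_val_one, cons_val]
      ring
    rw [this]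
    positivity
  have hTa : dot3 (unitTangent γ1 a1) (unitNormal γ1 b1) < 0 := by
    have : dot3 (unitTangent γ1 a1) (unitNormal γ1 b1) =
        -((norm3 (deriv γ1 b1))⁻¹ * (norm3 (deriv γ1 a1))⁻¹ *
          det3 (γ1 a1) (deriv γ1 a1) (deriv γ1 b1)) := by
      simp only [unitTangent, unitNormal, dot3_smul_left, dot3_smul_right, ← hclosed]
      simp only [det3, dot3, cross3, cons_val_zero, cons_val_one, cons_val]
      ring
    rw [this, neg_lt_zero]
    positivity
  obtain ⟨α, τ, haα, hατ, hτb, ho, hin⟩ := F.exists_bitangent hab hinj hclosed hTb hTa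
  set o := frameCenter (μ / √(1 + μ ^ 2)) (√(1 + μ ^ 2))⁻¹ γ1 (unitNormal γ1) α
  have hα : dot3 (γ1 α) o = μ / √(1 + μ ^ 2) := F.height_self α
  have hτ : dot3 (γ1 τ) o = μ / √(1 + μ ^ 2) := by
    rw [← ho]
    exact F.height_self τ
  have hmem : ∀ t ∈ Set.Icc a1 b1, t ≠ α → t ≠ τ → γ1 t ∈ muDisk μ o := fun t ht h1 h2 =>
    ⟨hreg.sphere t, hin t ht h1 h2⟩
  have hlim : ∀ t u, a1 ≤ t → t < u → u ≤ b1 → (∀ r ∈ Set.Ioo t u, r ≠ α ∧ r ≠ τ) →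
      γ1 t ∈ closure (muDisk μ o) := by
    intro t u ht htu hu hne
    refine mem_closure_of_tendsto
      ((F.cont_x.tendsto t).mono_left (nhdsWithin_le_nhds (s := Set.Ioi t))) ?_
    filter_upwards [Ioo_mem_nhdsGT htu] with r hr
    exact hmem r ⟨by linarith [hr.1], by linarith [hr.2]⟩ (hne r hr).1 (hne r hr).2
  refine ⟨o, F.center_unit α, ?_, γ1 α, γ1 τ, fun h => hατ.ne
    (hinj ⟨haα.le, by linarith⟩ ⟨by linarith, hτb⟩ h), ?_⟩
  · rintro _ ⟨t, ht, rfl⟩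
    by_cases h1 : t = α
    · subst h1
      exact hlim t τ ht.1 hατ hτb.le fun r hr => ⟨hr.1.ne', hr.2.ne⟩
    by_cases h2 : t = τ
    · subst h2
      exact hlim t b1 ht.1 hτb le_rfl fun r hr => ⟨(hατ.trans hr.1).ne', hr.1.ne'⟩
    exact subset_closure (hmem t ht h1 h2)
  · ext p
    simp only [Set.mem_inter_iff, Set.mem_insert_iff, Set.mem_singleton_iff]
    constructor
    · rintro ⟨hp, t, ht, rfl⟩
      by_contra! hne
      have := (hmem t ht (fun h => hne.1 (by rw [h])) fun h => hne.2 (by rw [h])).2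
      exact this.ne' hp.2
    · rintro (rfl | rfl)
      · exact ⟨⟨hreg.sphere α, hα⟩, α, ⟨haα.le, by linarith⟩, rfl⟩
      · exact ⟨⟨hreg.sphere τ, hτ⟩, τ, ⟨by linarith, hτb.le⟩, rfl⟩
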